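/- Fix an integer n ≥ 1. Let Ω₁ ⊆ ℍ_s^n be real-path-connected, let Ω₂ ⊆ ℍ_s^n be Ω₁-stem-preserving, let c ∈ ℍ, let g : Ω₂ → ℍ be path-slice, let γ ∈ 𝒫(ℂ^n, Ω₁) and let I ∈ 𝕊(Ω₁, γ), with q := γ^I(1). Then (c, I·c)·F_{Ω₁}^g(γ) = (c, −I·c)·F_{Ω₁}^g(γ̄) = (c, ℑ(q)·c)·ℱ_{Ω₁}^g(q), where γ̄ denotes the componentwise complex-conjugate path of γ. -/

import Mathlib

open scoped ENNReal NNReal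

noncomputable section

/-- The real quaternions. -/
abbrev ℍ := Quaternion ℝ

/-- The set `𝕊` of imaginary units of the quaternions. -/
def QS : Set ℍ := {I | I ^ 2 = -1}

/-- `Ψ_i^I : ℂ^n → ℂ_I^n ⊆ ℍ^n`, sending `x + y i` to `x + y I` componentwise. -/
def PsiI (n : ℕ) (I : ℍ) (z : Fin n → ℂ) : Fin n → ℍ :=
  fun ℓ => algebraMap ℝ ℍ (z ℓ).re + (z ℓ).im • I

/-- The slice `ℂ_I^n = (ℝ + ℝ I)^n ⊆ ℍ^n`. -/
def sliceCn (n : ℕ) (I : ℍ) : Set (Fin n → ℍ) := Set.range (PsiI n I)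

/-- The weakly slice cone `ℍ_s^n = ⋃_{I ∈ 𝕊} ℂ_I^n`. -/
def weakSliceCone (n : ℕ) : Set (Fin n → ℍ) := ⋃ I ∈ QS, sliceCn n I

/-- `Ω` is slice open (i.e. `Ω ∈ τ_s(ℍ_s^n)`): `Ω ⊆ ℍ_s^n` and each slice
`Ω_I = Ω ∩ ℂ_I^n` is open in `ℂ_I^n`, encoded via the homeomorphism `Ψ_i^I`. -/
def sliceOpen (n : ℕ) (Ω : Set (Fin n → ℍ)) : Prop :=
  Ω ⊆ weakSliceCone n ∧ ∀ I ∈ QS, IsOpen (PsiI n I ⁻¹' Ω)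

/-- The set `𝒫(ℂ^n)` of continuous paths `[0,1] → ℂ^n` with real start point,
encoded as functions `ℝ → ℂ^n` continuous on `[0,1]`. -/
def PathsC (n : ℕ) : Set (ℝ → Fin n → ℂ) :=
  {γ | ContinuousOn γ (Set.Icc 0 1) ∧ ∀ ℓ, (γ 0 ℓ).im = 0}

/-- `γ^I([0,1]) ⊆ Ω`. -/
def pathInSlice (n : ℕ) (Ω : Set (Fin n → ℍ)) (I : ℍ) (γ : ℝ → Fin n → ℂ) : Prop :=
  ∀ t ∈ Set.Icc (0 : ℝ) 1, PsiI n I (γ t) ∈ Ω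

/-- The set `𝕊(Ω, γ) = {I ∈ 𝕊 : γ^I ⊆ Ω}`. -/
def sliceUnits (n : ℕ) (Ω : Set (Fin n → ℍ)) (γ : ℝ → Fin n → ℂ) : Set ℍ :=
  {I | I ∈ QS ∧ pathInSlice n Ω I γ}

/-- The set `𝒫(ℂ^n, Ω)`. -/
def PathsIn (n : ℕ) (Ω : Set (Fin n → ℍ)) : Set (ℝ → Fin n → ℂ) :=
  {γ | γ ∈ PathsC n ∧ ∃ I, I ∈ sliceUnits n Ω γ}

/-- The straight segment `𝓛_z^w(t) = (1 - t)z + tw`. -/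
def segPath (n : ℕ) (z w : Fin n → ℂ) : ℝ → Fin n → ℂ :=
  fun t => (1 - t) • z + t • w

/-- Concatenation of paths. -/
def concatP (n : ℕ) (γ δ : ℝ → Fin n → ℂ) : ℝ → Fin n → ℂ :=
  fun t => if t ≤ 1 / 2 then γ (2 * t) else δ (2 * t - 1)

/-- `𝓛_γ(z) := γ ∘ 𝓛_{γ(1)}^z`, the extension of `γ` by the segment from `γ(1)` to `z`. -/
def extendPath (n : ℕ) (γ : ℝ → Fin n → ℂ) (z : Fin n → ℂ) : ℝ → Fin n → ℂ :=
  concatP n γ (segPath n (γ 1) z)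

/-- The ball `B_{𝒫(ℂ^n)}(γ, r)` in path space. -/
def pathBall (n : ℕ) (γ : ℝ → Fin n → ℂ) (r : ℝ) : Set (ℝ → Fin n → ℂ) :=
  {β | ∃ z ∈ Metric.ball (γ 1) r, β = extendPath n γ z}

/-- `B_I(c^I, r) ⊆ Ω_I`, encoded via `Ψ_i^I`. -/
def ballInSlice (n : ℕ) (Ω : Set (Fin n → ℍ)) (I : ℍ) (c : Fin n → ℂ) (r : ℝ) : Prop :=
  ∀ w ∈ Metric.ball c r, PsiI n I w ∈ Ω

/-- `r_{γ,Ω}`, as an extended nonnegative real. -/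
def rPath (n : ℕ) (Ω : Set (Fin n → ℍ)) (γ : ℝ → Fin n → ℂ) : ℝ≥0∞ :=
  sSup {x : ℝ≥0∞ | ∃ r : ℝ≥0, x = r ∧ pathBall n γ r ⊆ PathsIn n Ω}

/-- `r^{𝕊'}_{γ,Ω}`, as an extended nonnegative real. -/
def rSliceSet (n : ℕ) (Ω : Set (Fin n → ℍ)) (γ : ℝ → Fin n → ℂ) (S' : Set ℍ) : ℝ≥0∞ :=
  sSup {x : ℝ≥0∞ | ∃ r : ℝ≥0, x = r ∧ ∀ I ∈ S', ballInSlice n Ω I (γ 1) r}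

/-- `r²_{γ,Ω}`, as an extended nonnegative real. -/
def r2Slice (n : ℕ) (Ω : Set (Fin n → ℍ)) (γ : ℝ → Fin n → ℂ) : ℝ≥0∞ :=
  sSup {x : ℝ≥0∞ | ∃ S'' : Set ℍ, S'' ⊆ sliceUnits n Ω γ ∧ S''.Nontrivial ∧ x = rSliceSet n Ω γ S''}

/-- `r^I_{γ,Ω}`, as an extended nonnegative real. -/
def rISlice (n : ℕ) (Ω : Set (Fin n → ℍ)) (γ : ℝ → Fin n → ℂ) (I : ℍ) : ℝ≥0∞ :=
  sSup {x : ℝ≥0∞ | ∃ r : ℝ≥0, x = r ∧ ballInSlice n Ω I (γ 1) r}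

/-- `Ω` is real-path-connected. -/
def realPathConnected (n : ℕ) (Ω : Set (Fin n → ℍ)) : Prop :=
  ∀ q ∈ Ω, ∃ γ ∈ PathsIn n Ω, ∃ I ∈ sliceUnits n Ω γ, PsiI n I (γ 1) = q

/-- `Ω₂` is `Ω₁`-stem-preserving. -/
def stemPreserving (n : ℕ) (Ω₁ Ω₂ : Set (Fin n → ℍ)) : Prop :=
  (∀ γ ∈ PathsIn n Ω₁, (sliceUnits n Ω₂ γ).Nontrivial) ∧
  (∀ α ∈ PathsIn n Ω₁, ∀ β ∈ PathsIn n Ω₁, α 1 = β 1 →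
    ¬ ∃ I, sliceUnits n Ω₂ α ∩ sliceUnits n Ω₂ β = {I})

/-- `F : 𝒫(ℂ^n, Ω) → ℍ^{2×1}` is a (path-slice) stem function of `f`:
`f(γ^I(1)) = (1, I)·F(γ)`. -/
def isStemOf (n : ℕ) (Ω : Set (Fin n → ℍ)) (f : (Fin n → ℍ) → ℍ)
    (F : (ℝ → Fin n → ℂ) → ℍ × ℍ) : Prop :=
  ∀ γ ∈ PathsIn n Ω, ∀ I ∈ sliceUnits n Ω γ, f (PsiI n I (γ 1)) = (F γ).1 + I * (F γ).2

/-- `f` is a path-slice function on `Ω`. -/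
def PathSliceFn (n : ℕ) (Ω : Set (Fin n → ℍ)) (f : (Fin n → ℍ) → ℍ) : Prop :=
  ∃ F, isStemOf n Ω f F

/-- `f` is (weakly) slice regular on `Ω`: each restriction `f_I` is real differentiable
and satisfies the Cauchy-Riemann equations `(∂/∂x_ℓ + I ∂/∂y_ℓ) f_I = 0`. -/
def SliceRegular (n : ℕ) (Ω : Set (Fin n → ℍ)) (f : (Fin n → ℍ) → ℍ) : Prop :=
  ∀ I ∈ QS,
    DifferentiableOn ℝ (fun z => f (PsiI n I z)) (PsiI n I ⁻¹' Ω) ∧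
    ∀ z ∈ PsiI n I ⁻¹' Ω, ∀ ℓ : Fin n,
      fderivWithin ℝ (fun z => f (PsiI n I z)) (PsiI n I ⁻¹' Ω) z (Pi.single ℓ 1)
        + I * fderivWithin ℝ (fun z => f (PsiI n I z)) (PsiI n I ⁻¹' Ω) z
            (Pi.single ℓ Complex.I) = 0

open Classical in
/-- `F_{Ω₁}^f` : a choice of stem function of the path-slice function `f : Ω₂ → ℍ`
(its restriction to `𝒫(ℂ^n, Ω₁)` is independent of the choice). -/
def stemF (n : ℕ) (Ω₂ : Set (Fin n → ℍ)) (f : (Fin n → ℍ) → ℍ) :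
    (ℝ → Fin n → ℂ) → ℍ × ℍ :=
  if h : ∃ F, isStemOf n Ω₂ f F then h.choose else fun _ => 0

open Classical in
/-- The map `ℑ : ℍ_s^n → 𝕊 ∪ {0}`. -/
def scrI {n : ℕ} (q : Fin n → ℍ) : ℍ :=
  if h : (Finset.univ.filter fun ℓ : Fin n => Quaternion.im (q ℓ) ≠ 0).Nonempty then
    ‖Quaternion.im (q ((Finset.univ.filter
        fun ℓ : Fin n => Quaternion.im (q ℓ) ≠ 0).min' h))‖⁻¹ •
      Quaternion.im (q ((Finset.univ.filter
        fun ℓ : Fin n => Quaternion.im (q ℓ) ≠ 0).min' h))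
  else 0

open Classical in
/-- The map `ℱ_{Ω₁}^g : Ω₁ → ℍ^{2×1}`. -/
def scrF (n : ℕ) (Ω₁ Ω₂ : Set (Fin n → ℍ)) (g : (Fin n → ℍ) → ℍ) (q : Fin n → ℍ) :
    ℍ × ℍ :=
  if h : (∃ ℓ, Quaternion.im (q ℓ) ≠ 0) ∧
      ∃ γ, γ ∈ PathsIn n Ω₁ ∧ pathInSlice n Ω₁ (scrI q) γ ∧ PsiI n (scrI q) (γ 1) = q then
    stemF n Ω₂ g h.2.choose
  else (g q, 0)

/-- The `*`-product `(f*g)(q) = (f(q), ℑ(q)f(q))·ℱ_{Ω₁}^g(q)`. -/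
def starProd (n : ℕ) (Ω₁ Ω₂ : Set (Fin n → ℍ)) (f g : (Fin n → ℍ) → ℍ) :
    (Fin n → ℍ) → ℍ :=
  fun q => f q * (scrF n Ω₁ Ω₂ g q).1 + scrI q * f q * (scrF n Ω₁ Ω₂ g q).2

/-- Componentwise complex conjugate of a path. -/
def conjPath (n : ℕ) (γ : ℝ → Fin n → ℂ) : ℝ → Fin n → ℂ :=
  fun t ℓ => starRingEnd ℂ (γ t ℓ)

end

theorem qs_re {I : ℍ} (h : I ∈ QS) : I.re = 0 ∧ ‖I‖ = 1 := by
  have h : I ^ 2 = -1 := h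
  have hn : ‖I‖ = 1 := by
    have := congrArg norm h
    rw [norm_pow, norm_neg, norm_one] at this
    nlinarith [norm_nonneg I]
  refine ⟨?_, hn⟩
  have hs : I.re ^ 2 + I.imI ^ 2 + I.imJ ^ 2 + I.imK ^ 2 = 1 := by
    have := Quaternion.normSq_def' I
    rw [Quaternion.normSq_eq_norm_mul_self, hn] at this
    linarith
  have hr := congrArg QuaternionAlgebra.re h
  rw [pow_two] at hr
  have h2 : I.re * I.re - I.imI * I.imI - I.imJ * I.imJ - I.imK * I.imK = -1 := by
    have h1 : QuaternionAlgebra.re (1 : ℍ) = 1 := rfl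
    simp at hr
    rw [hr, h1]
  have : I.re ^ 2 = 0 := by nlinarith
  simpa using this

theorem psi_im {n : ℕ} {I : ℍ} (h : I ∈ QS) (z : Fin n → ℂ) (l : Fin n) :
    Quaternion.im (PsiI n I z l) = (z l).im • I := by
  have := (qs_re h).1
  ext <;> simp [PsiI, this]

theorem qs_ne {I : ℍ} (h : I ∈ QS) : I ≠ 0 := by
  intro h0
  have := (qs_re h).2
  simp [h0] at this

theorem scrI_psi {n : ℕ} {I : ℍ} (h : I ∈ QS) (z : Fin n → ℂ) (hz : ∃ l, (z l).im ≠ 0) :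
    scrI (PsiI n I z) = I ∨ scrI (PsiI n I z) = -I := by
  classical
  have hI := qs_ne h
  have hne : (Finset.univ.filter
      fun l : Fin n => Quaternion.im (PsiI n I z l) ≠ 0).Nonempty := by
    obtain ⟨l, hl⟩ := hz
    refine ⟨l, ?_⟩
    simp only [Finset.mem_filter, Finset.mem_univ, true_and]
    rw [psi_im h]
    exact smul_ne_zero hl hI
  have hmem := Finset.min'_mem _ hne
  unfold scrI
  rw [dif_pos (by convert hne)]
  simp only [Finset.mem_filter, Finset.mem_univ, true_and] at hmem
  have key : ∀ l, Quaternion.im (PsiI n I z l) ≠ 0 →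
      ‖Quaternion.im (PsiI n I z l)‖⁻¹ • Quaternion.im (PsiI n I z l) = I ∨
      ‖Quaternion.im (PsiI n I z l)‖⁻¹ • Quaternion.im (PsiI n I z l) = -I := by
    intro l hl
    rw [psi_im h] at hl ⊢
    have hy : (z l).im ≠ 0 := fun h0 => hl (by rw [h0, zero_smul])
    rw [norm_smul, (qs_re h).2, mul_one, smul_smul, Real.norm_eq_abs]
    rcases lt_or_gt_of_ne hy with h1 | h1
    · right
      rw [abs_of_neg h1, inv_neg, neg_mul, inv_mul_cancel₀ hy, neg_smul, one_smul]
    · left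
      rw [abs_of_pos h1, inv_mul_cancel₀ hy, one_smul]
  apply key
  convert hmem

theorem scrI_real {n : ℕ} {I : ℍ} (h : I ∈ QS) (z : Fin n → ℂ) (hz : ∀ l, (z l).im = 0) :
    scrI (PsiI n I z) = 0 := by
  unfold scrI
  rw [dif_neg]
  rintro ⟨l, hl⟩
  simp only [Finset.mem_filter, Finset.mem_univ, true_and] at hl
  apply hl
  rw [psi_im h, hz, zero_smul]

theorem psi_inj {n : ℕ} {I : ℍ} (h : I ∈ QS) {z w : Fin n → ℂ}
    (e : PsiI n I z = PsiI n I w) : z = w := by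
  funext l
  have e1 := congrFun e l
  have e2 : (z l).im • I = (w l).im • I := by rw [← psi_im h, ← psi_im h, e1]
  have e3 := congrArg QuaternionAlgebra.re e1
  apply Complex.ext
  · simpa [PsiI, (qs_re h).1] using e3
  · exact smul_left_injective ℝ (qs_ne h) e2

theorem psi_conj {n : ℕ} (I : ℍ) (γ : ℝ → Fin n → ℂ) (t : ℝ) :
    PsiI n (-I) (conjPath n γ t) = PsiI n I (γ t) := by
  funext l
  simp [PsiI, conjPath]

theorem qs_neg {I : ℍ} (h : I ∈ QS) : -I ∈ QS := by
  have h : I ^ 2 = -1 := h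
  change (-I) ^ 2 = -1
  rw [neg_sq, h]

theorem units_conj {n : ℕ} {Ω : Set (Fin n → ℍ)} {γ : ℝ → Fin n → ℂ} {I : ℍ}
    (h : I ∈ sliceUnits n Ω γ) : -I ∈ sliceUnits n Ω (conjPath n γ) := by
  refine ⟨qs_neg h.1, fun t ht => ?_⟩
  rw [psi_conj]
  exact h.2 t ht

theorem paths_conj {n : ℕ} {Ω : Set (Fin n → ℍ)} {γ : ℝ → Fin n → ℂ}
    (h : γ ∈ PathsIn n Ω) : conjPath n γ ∈ PathsIn n Ω := by
  obtain ⟨⟨h1, h2⟩, I, hI⟩ := h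
  refine ⟨⟨?_, fun l => ?_⟩, -I, units_conj hI⟩
  · unfold conjPath
    rw [continuousOn_pi] at h1 ⊢
    intro l
    exact Complex.continuous_conj.comp_continuousOn (h1 l)
  · simp [conjPath, h2 l]

theorem stemF_spec {n : ℕ} {Ω : Set (Fin n → ℍ)} {g : (Fin n → ℍ) → ℍ}
    (hg : PathSliceFn n Ω g) : isStemOf n Ω g (stemF n Ω g) := by
  have hg' : ∃ F, isStemOf n Ω g F := hg
  unfold stemF
  rw [dif_pos hg']
  exact hg'.choose_spec

theorem two_eq {J K a b a' b' : ℍ} (hJK : J ≠ K)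
    (h1 : a + J * b = a' + J * b') (h2 : a + K * b = a' + K * b') : a = a' ∧ b = b' := by
  have h3 : (J - K) * (b - b') = 0 := by
    have : (J - K) * (b - b') = ((a + J * b) - (a' + J * b')) - ((a + K * b) - (a' + K * b')) := by
      noncomm_ring
    rw [this, h1, h2]; simp
  have hb : b = b' := by
    rcases mul_eq_zero.1 h3 with h | h
    · exact absurd (sub_eq_zero.1 h) hJK
    · exact sub_eq_zero.1 h
  subst hb
  exact ⟨add_right_cancel h1, rfl⟩

theorem stem_conj {n : ℕ} {Ω₁ Ω₂ : Set (Fin n → ℍ)} (hsp : stemPreserving n Ω₁ Ω₂)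
    {g : (Fin n → ℍ) → ℍ} (hg : PathSliceFn n Ω₂ g)
    {γ : ℝ → Fin n → ℂ} (hγ : γ ∈ PathsIn n Ω₁) :
    (stemF n Ω₂ g γ).1 = (stemF n Ω₂ g (conjPath n γ)).1 ∧
    (stemF n Ω₂ g γ).2 = -(stemF n Ω₂ g (conjPath n γ)).2 := by
  obtain ⟨J, hJ, K, hK, hJK⟩ := hsp.1 γ hγ
  have hγ2 : γ ∈ PathsIn n Ω₂ := ⟨hγ.1, J, hJ⟩
  have key : ∀ L ∈ sliceUnits n Ω₂ γ, (stemF n Ω₂ g γ).1 + L * (stemF n Ω₂ g γ).2 =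
      (stemF n Ω₂ g (conjPath n γ)).1 + L * (-(stemF n Ω₂ g (conjPath n γ)).2) := by
    intro L hL
    rw [← stemF_spec hg γ hγ2 L hL, ← psi_conj,
      stemF_spec hg _ (paths_conj hγ2) _ (units_conj hL)]
    simp
  exact two_eq hJK (key J hJ) (key K hK)

theorem stem_same {n : ℕ} {Ω₁ Ω₂ : Set (Fin n → ℍ)} (hsp : stemPreserving n Ω₁ Ω₂)
    {g : (Fin n → ℍ) → ℍ} (hg : PathSliceFn n Ω₂ g)
    {α β : ℝ → Fin n → ℂ} (hα : α ∈ PathsC n) (hβ : β ∈ PathsC n) {I : ℍ}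
    (hIα : I ∈ sliceUnits n Ω₁ α) (hIβ : I ∈ sliceUnits n Ω₁ β) (he : α 1 = β 1) :
    stemF n Ω₂ g α = stemF n Ω₂ g β := by
  let δ : ℝ → Fin n → ℂ := fun t => α (min (2 * t) 1) + β (min 1 (2 - 2 * t)) - β 1
  have d1 : ∀ t, t ≤ 1 / 2 → δ t = α (2 * t) := by
    intro t ht
    simp only [δ]
    rw [min_eq_left (by linarith), min_eq_left (by linarith), add_sub_cancel_right]
  have d2 : ∀ t, 1 / 2 ≤ t → δ t = β (2 - 2 * t) := by
    intro t ht
    simp only [δ]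
    rw [min_eq_right (by linarith), min_eq_right (by linarith), he, add_sub_cancel_left]
  have hδ : δ ∈ PathsC n := by
    refine ⟨?_, fun l => ?_⟩
    · refine ContinuousOn.sub (ContinuousOn.add ?_ ?_) continuousOn_const
      · refine hα.1.comp (by fun_prop) (fun t ht => ⟨?_, min_le_right _ _⟩)
        exact le_min (by linarith [ht.1]) zero_le_one
      · refine hβ.1.comp (by fun_prop) (fun t ht => ⟨?_, min_le_left _ _⟩)
        exact le_min zero_le_one (by linarith [ht.2])
    · rw [d1 0 (by norm_num), mul_zero]
      exact hα.2 l
  have hIδ : I ∈ sliceUnits n Ω₁ δ := by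
    refine ⟨hIα.1, fun t ht => ?_⟩
    rcases le_total t (1 / 2) with h | h
    · rw [d1 t h]
      exact hIα.2 _ ⟨by linarith [ht.1], by linarith⟩
    · rw [d2 t h]
      exact hIβ.2 _ ⟨by linarith [ht.2], by linarith⟩
  have sα : ∀ L ∈ sliceUnits n Ω₂ δ, L ∈ sliceUnits n Ω₂ α := by
    intro L hL
    refine ⟨hL.1, fun t ht => ?_⟩
    have := hL.2 (t / 2) ⟨by linarith [ht.1], by linarith [ht.2]⟩
    rw [d1 _ (by linarith [ht.2])] at this
    convert this using 3
    ring
  have sβ : ∀ L ∈ sliceUnits n Ω₂ δ, L ∈ sliceUnits n Ω₂ β := by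
    intro L hL
    refine ⟨hL.1, fun t ht => ?_⟩
    have := hL.2 (1 - t / 2) ⟨by linarith [ht.2], by linarith [ht.1]⟩
    rw [d2 _ (by linarith [ht.2])] at this
    convert this using 3
    ring
  obtain ⟨J, hJ, K, hK, hJK⟩ := hsp.1 δ ⟨hδ, I, hIδ⟩
  have key : ∀ L ∈ sliceUnits n Ω₂ δ, (stemF n Ω₂ g α).1 + L * (stemF n Ω₂ g α).2 =
      (stemF n Ω₂ g β).1 + L * (stemF n Ω₂ g β).2 := by
    intro L hL
    rw [← stemF_spec hg α ⟨hα, L, sα L hL⟩ L (sα L hL), he,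
      stemF_spec hg β ⟨hβ, L, sβ L hL⟩ L (sβ L hL)]
  have := two_eq hJK (key J hJ) (key K hK)
  exact Prod.ext this.1 this.2

theorem scrF_eq {n : ℕ} {Ω₁ Ω₂ : Set (Fin n → ℍ)} (hsp : stemPreserving n Ω₁ Ω₂)
    {g : (Fin n → ℍ) → ℍ} (hg : PathSliceFn n Ω₂ g)
    {γ : ℝ → Fin n → ℂ} (hγ : γ ∈ PathsIn n Ω₁) {I : ℍ} (hI : I ∈ sliceUnits n Ω₁ γ)
    {q : Fin n → ℍ} (hq : PsiI n I (γ 1) = q) (hs : scrI q = I)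
    (hz : ∃ l, (γ 1 l).im ≠ 0) : scrF n Ω₁ Ω₂ g q = stemF n Ω₂ g γ := by
  have h : (∃ l, Quaternion.im (q l) ≠ 0) ∧
      ∃ γ, γ ∈ PathsIn n Ω₁ ∧ pathInSlice n Ω₁ (scrI q) γ ∧ PsiI n (scrI q) (γ 1) = q := by
    refine ⟨?_, γ, hγ, ?_, ?_⟩
    · obtain ⟨l, hl⟩ := hz
      refine ⟨l, ?_⟩
      rw [← hq, psi_im hI.1]
      exact smul_ne_zero hl (qs_ne hI.1)
    · rw [hs]; exact hI.2
    · rw [hs]; exact hq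
  unfold scrF
  rw [dif_pos h]
  obtain ⟨k1, k2, k3⟩ := h.2.choose_spec
  generalize h.2.choose = δ at *
  rw [hs] at k2 k3
  exact stem_same hsp hg k1.1 hγ.1 ⟨hI.1, k2⟩ hI (psi_inj hI.1 (k3.trans hq.symm))

theorem statement13 (n : ℕ) (hn : 1 ≤ n) (Ω₁ Ω₂ : Set (Fin n → ℍ))
    (hΩ₁ : Ω₁ ⊆ weakSliceCone n) (hΩ₂ : Ω₂ ⊆ weakSliceCone n)
    (hrc : realPathConnected n Ω₁) (hsp : stemPreserving n Ω₁ Ω₂)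
    (c : ℍ) (g : (Fin n → ℍ) → ℍ) (hg : PathSliceFn n Ω₂ g)
    (γ : ℝ → Fin n → ℂ) (hγ : γ ∈ PathsIn n Ω₁) (I : ℍ) (hI : I ∈ sliceUnits n Ω₁ γ) :
    c * (stemF n Ω₂ g γ).1 + I * c * (stemF n Ω₂ g γ).2
        = c * (stemF n Ω₂ g (conjPath n γ)).1
          + (-I) * c * (stemF n Ω₂ g (conjPath n γ)).2 ∧
    c * (stemF n Ω₂ g γ).1 + I * c * (stemF n Ω₂ g γ).2
        = c * (scrF n Ω₁ Ω₂ g (PsiI n I (γ 1))).1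
          + scrI (PsiI n I (γ 1)) * c * (scrF n Ω₁ Ω₂ g (PsiI n I (γ 1))).2 := by
  have hc := stem_conj hsp hg hγ
  refine ⟨by rw [hc.1, hc.2]; simp, ?_⟩
  by_cases hz : ∃ l, (γ 1 l).im ≠ 0
  · rcases scrI_psi hI.1 (γ 1) hz with hs | hs
    · rw [scrF_eq hsp hg hγ hI rfl hs hz, hs]
    · rw [scrF_eq hsp hg (paths_conj hγ) (units_conj hI) (psi_conj I γ 1) hs
        (by simpa [conjPath] using hz), hs, hc.1, hc.2]
      simp
  · push Not at hz
    obtain ⟨J, hJ, K, hK, hJK⟩ := hsp.1 γ hγ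
    have hP : ∀ L, PsiI n L (γ 1) = PsiI n I (γ 1) := by
      intro L
      funext l
      simp [PsiI, hz l]
    have key : ∀ L ∈ sliceUnits n Ω₂ γ, (stemF n Ω₂ g γ).1 + L * (stemF n Ω₂ g γ).2 =
        g (PsiI n I (γ 1)) + L * 0 := by
      intro L hL
      rw [← stemF_spec hg γ ⟨hγ.1, L, hL⟩ L hL, hP L]
      simp
    have h2 := two_eq hJK (key J hJ) (key K hK)
    have hF : scrF n Ω₁ Ω₂ g (PsiI n I (γ 1)) = (g (PsiI n I (γ 1)), 0) := by
      unfold scrF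
      rw [dif_neg]
      rintro ⟨⟨l, hl⟩, -⟩
      apply hl
      rw [psi_im hI.1, hz, zero_smul]
    rw [hF, h2.1, h2.2]
    simp
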